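/- arXiv:1903.00868 — 2 statements merged into one kernel-verified Lean document; each statement's English description precedes it below -/
import Mathlib

section
/- Discrete orthogonality of generalized Schur polynomials (Proposition 3.2): for all λ, μ ∈ Λ^{(m,n)}, Σ_{λ̂ ∈ Λ^{(m,n)}} P_λ(x_λ̂^{(m,n)}) P_μ(x_λ̂^{(m,n)}) W_λ̂ equals 1 if μ = λ and 0 if μ ≠ λ. -/
open MeasureTheory Real Finset

noncomputable section

/-- Vandermonde product `∏_{j<k} (x_j - x_k)`. -/
def vand (n : ℕ) (x : Fin n → ℝ) : ℝ :=
  ∏ j : Fin n, ∏ k ∈ Finset.univ.filter (fun k => j < k), (x j - x k)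

/-- The determinant `det [p_{λ_j + n - j}(x_k)]_{1 ≤ j,k ≤ n}`. -/
def schurDet (n : ℕ) (p : ℕ → Polynomial ℝ) (lam : Fin n → ℕ) (x : Fin n → ℝ) : ℝ :=
  Matrix.det (Matrix.of fun j k : Fin n => (p (lam j + (n - 1 - (j : ℕ)))).eval (x k))

/-- The fundamental alcove `Λ^{(m,n)}` : decreasing sequences with entries ≤ m. -/
def Lam (m n : ℕ) : Finset (Fin n → ℕ) :=
  (Fintype.piFinset fun _ => Finset.range (m + 1)).filter
    fun lam => ∀ i j : Fin n, i ≤ j → lam j ≤ lam i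

/-- The node `x^{(m,n)}_λ̂` with `j`-th component `x^{(m+n)}_{λ̂_j + n - j}`. -/
def node (n : ℕ) (xr : ℕ → ℝ) (lh : Fin n → ℕ) : Fin n → ℝ :=
  fun j => xr (lh j + (n - 1 - (j : ℕ)))

/-- Christoffel weight `(∑_{k=0}^{N-1} p_k(x_ℓ)²)⁻¹`. -/
def chrW (p : ℕ → Polynomial ℝ) (N : ℕ) (xr : ℕ → ℝ) (l : ℕ) : ℝ :=
  (∑ k ∈ Finset.range N, ((p k).eval (xr l)) ^ 2)⁻¹

/-!
Let `A` be the matrix `A k l = p k (x l)` for `k, l < m + n`, where the `x l` are the roots of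
`p (m + n)`, and let `D` be the diagonal matrix of Christoffel weights. If `x` is such a root, then
the polynomial `q = p (m + n) / (X - x)` satisfies `L (q * f) = f x * L q` for all `f` of degree
below `m + n`, where `L` is integration against the weight. Hence `q` is a multiple of the
Christoffel–Darboux kernel at `x`, which therefore vanishes at all the other roots. In other words,
`Aᵀ * A = D⁻¹`, and so `A * D * Aᵀ = 1`.

The factor `V ^ 2` of the weight turns the products of Schur polynomials into products of minors of
`A`. By the Cauchy–Binet formula their weighted sum is a minor of `A * D * Aᵀ = 1`, which is `1` if
its rows and columns agree and `0` otherwise.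
-/

section CauchyBinet

open scoped Matrix

variable {R ι κ : Type*} [CommRing R] {n : ℕ}

theorem det_mul_eq_sum_det_submatrix_mul_prod [Fintype ι] [Fintype κ] [DecidableEq κ]
    (A : Matrix κ ι R) (B : Matrix ι κ R) :
    (A * B).det = ∑ f : κ → ι, (A.submatrix id f).det * ∏ k, B (f k) k := by
  simp only [Matrix.det_apply', Matrix.mul_apply, Finset.prod_univ_sum, Fintype.piFinset_univ,
    Finset.mul_sum, Finset.sum_mul, Matrix.submatrix_apply, id_eq]
  rw [Finset.sum_comm]
  simp only [Finset.prod_mul_distrib, mul_assoc]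

theorem det_submatrix_mul_det_submatrix [Fintype κ] [DecidableEq κ]
    (A : Matrix κ ι R) (B : Matrix ι κ R) (g : κ → ι) :
    (A.submatrix id g).det * (B.submatrix g id).det =
      ∑ σ : Equiv.Perm κ, (A.submatrix id (g ∘ σ)).det * ∏ k, B ((g ∘ σ) k) k := by
  rw [Matrix.det_apply' (B.submatrix g id), Finset.mul_sum]
  refine Finset.sum_congr rfl fun σ _ => ?_
  have det_comp : (A.submatrix id (g ∘ σ)).det = Equiv.Perm.sign σ * (A.submatrix id g).det :=
    Matrix.det_permute' σ (A.submatrix id g)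
  rw [det_comp]
  simp only [Matrix.submatrix_apply, id_eq, Function.comp_apply]
  ring

variable [LinearOrder ι]

theorem eq_of_strictAnti_of_comp_perm_eq {g g' : Fin n → ι} (hg : StrictAnti g)
    (hg' : StrictAnti g') {σ τ : Equiv.Perm (Fin n)} (h : g ∘ σ = g' ∘ τ) : g = g' := by
  rw [← hg.range_inj hg', ← σ.surjective.range_comp g, ← τ.surjective.range_comp g', h]

theorem exists_strictAnti_comp_perm_eq {f : Fin n → ι} (hf : Function.Injective f) :
    ∃ (g : Fin n → ι) (σ : Equiv.Perm (Fin n)), StrictAnti g ∧ g ∘ σ = f := by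
  let τ : Equiv.Perm (Fin n) := Tuple.sort (OrderDual.toDual ∘ f)
  have antitone_comp : Antitone (f ∘ τ) := Tuple.monotone_sort (OrderDual.toDual ∘ f)
  refine ⟨f ∘ τ, τ⁻¹, antitone_comp.strictAnti_of_injective (hf.comp τ.injective), ?_⟩
  ext i
  simp

theorem det_one_submatrix_of_strictAnti {s t : Fin n → ι} (hs : StrictAnti s)
    (ht : StrictAnti t) :
    ((1 : Matrix ι ι R).submatrix s t).det = if s = t then 1 else 0 := by
  split_ifs with h
  · rw [h, Matrix.submatrix_one _ ht.injective, Matrix.det_one]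
  · rw [Matrix.det_apply']
    refine Finset.sum_eq_zero fun σ _ => ?_
    have comp_ne : s ∘ σ ≠ t := fun hσ =>
      h (eq_of_strictAnti_of_comp_perm_eq hs ht (τ := 1) hσ)
    obtain ⟨i, hi⟩ := Function.ne_iff.1 comp_ne
    have prod_zero : ∏ i, (1 : Matrix ι ι R).submatrix s t (σ i) i = 0 :=
      Finset.prod_eq_zero (Finset.mem_univ i) (Matrix.one_apply_ne hi)
    rw [prod_zero, mul_zero]

variable [Fintype ι]

open scoped Classical in
theorem sum_strictAnti_sum_perm {M : Type*} [AddCommMonoid M] (F : (Fin n → ι) → M)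
    (hF : ∀ f, ¬ Function.Injective f → F f = 0) :
    ∑ g : Fin n → ι with StrictAnti g, ∑ σ : Equiv.Perm (Fin n), F (g ∘ σ) = ∑ f, F f := by
  rw [← Finset.sum_product']
  refine Finset.sum_of_injOn (fun q => q.1 ∘ q.2) ?_ (by simp) ?_ fun _ _ => rfl
  · rintro ⟨g, σ⟩ hg ⟨g', τ⟩ hg' (h : g ∘ σ = g' ∘ τ)
    simp only [Finset.coe_product, Set.mem_prod, Finset.mem_coe, Finset.mem_filter_univ] at hg hg'
    obtain rfl := eq_of_strictAnti_of_comp_perm_eq hg.1 hg'.1 h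
    rw [Equiv.ext fun i => hg.1.injective (congrFun h i)]
  · refine fun f _ f_notMem => hF f fun f_inj => f_notMem ?_
    obtain ⟨g, σ, hg, rfl⟩ := exists_strictAnti_comp_perm_eq f_inj
    exact ⟨(g, σ), by simpa using hg, rfl⟩

open scoped Classical in
theorem cauchy_binet (A : Matrix (Fin n) ι R) (B : Matrix ι (Fin n) R) :
    ∑ g : Fin n → ι with StrictAnti g, (A.submatrix id g).det * (B.submatrix g id).det =
      (A * B).det := by
  simp only [det_submatrix_mul_det_submatrix, det_mul_eq_sum_det_submatrix_mul_prod]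
  refine sum_strictAnti_sum_perm (fun f => (A.submatrix id f).det * ∏ k, B (f k) k) fun f hf => ?_
  obtain ⟨i, j, hij, hne⟩ := Function.not_injective_iff.1 hf
  rw [Matrix.det_zero_of_column_eq hne (by simp [hij]), zero_mul]

open scoped Classical in
theorem sum_det_mul_det_mul_prod_eq_det (A : Matrix κ ι R) (d : ι → R) (s t : Fin n → κ) :
    ∑ g : Fin n → ι with StrictAnti g,
      (A.submatrix s g).det * (A.submatrix t g).det * ∏ j, d (g j) =
      ((A * Matrix.diagonal d * Aᵀ).submatrix s t).det := by
  have det_weighted (g : Fin n → ι) :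
      ((Matrix.diagonal d * Aᵀ).submatrix g t).det =
        (A.submatrix t g).det * ∏ j, d (g j) := by
    rw [← Matrix.det_transpose (A.submatrix t g), mul_comm, ← Matrix.det_mul_column]
    congr 1
    ext i j
    simp [Matrix.diagonal_mul]
  calc
    ∑ g : Fin n → ι with StrictAnti g,
        (A.submatrix s g).det * (A.submatrix t g).det * ∏ j, d (g j) =
      ∑ g : Fin n → ι with StrictAnti g, ((A.submatrix s id).submatrix id g).det *
          (((Matrix.diagonal d * Aᵀ).submatrix id t).submatrix g id).det := by
      simp only [Matrix.submatrix_submatrix, Function.comp_id, Function.id_comp, det_weighted,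
        mul_assoc]
    _ = ((A * Matrix.diagonal d * Aᵀ).submatrix s t).det := by
      rw [cauchy_binet, Matrix.mul_assoc, ← Matrix.submatrix_mul _ _ s id t Function.bijective_id]

end CauchyBinet

section OrthonormalPolynomials

open Polynomial
open scoped Matrix

variable {K : Type*} [Field K]

/-- The polynomials `p 0, p 1, …` are orthonormal for the bilinear form `(f, g) ↦ L (f * g)`.
Only the linear functional `L` of integration against the weight is kept, not the weight itself. -/
def OrthonormalFor (L : K[X] →ₗ[K] K) (p : Sequence K) : Prop :=
  ∀ l k, L (p l * p k) = if l = k then 1 else 0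

/-- The Christoffel–Darboux kernel `∑_{k < N} p_k(x) p_k(y)`, as a polynomial in `y`. Its value at
`y = x` is the inverse of the Christoffel weight. -/
def christoffelDarboux (p : ℕ → K[X]) (N : ℕ) (x : K) : K[X] :=
  ∑ k ∈ Finset.range N, (p k).eval x • p k

/-- The matrix of values of `p 0, …, p (N - 1)` at the points `x 0, …, x (N - 1)`, with rows indexed
by polynomials. When the points are the roots of `p N`, its minors are the determinants `schurDet`
at the nodes. -/
def evalMatrix {N : ℕ} (p : ℕ → K[X]) (x : Fin N → K) : Matrix (Fin N) (Fin N) K :=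
  Matrix.of fun k l => (p k).eval (x l)

theorem eval_christoffelDarboux (p : ℕ → K[X]) (N : ℕ) (x y : K) :
    (christoffelDarboux p N x).eval y = ∑ k ∈ Finset.range N, (p k).eval x * (p k).eval y := by
  simp [christoffelDarboux, eval_finsetSum]

theorem christoffelDarboux_eval_self_pos [LinearOrder K] [IsStrictOrderedRing K] (p : Sequence K)
    {N : ℕ} (hN : 0 < N) (x : K) : 0 < (christoffelDarboux p N x).eval x := by
  rw [eval_christoffelDarboux]
  refine Finset.sum_pos' (fun k _ => mul_self_nonneg _) ⟨0, Finset.mem_range.2 hN, ?_⟩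
  have eval_zero_ne_zero : (p 0).eval x ≠ 0 := by
    have degree_zero : (p 0).degree = 0 := p.degree_eq 0
    rw [eq_C_of_degree_eq_zero degree_zero, eval_C]
    exact coeff_ne_zero_of_eq_degree degree_zero
  exact mul_self_pos.2 eval_zero_ne_zero

namespace OrthonormalFor

variable {L : K[X] →ₗ[K] K} {p : Sequence K} {N : ℕ}

theorem eq_sum_smul (h : OrthonormalFor L p) {q : K[X]} (hq : q.degree < N) :
    q = ∑ k ∈ Finset.range N, L (q * p k) • p k := by
  have q_mem_span : q ∈ Submodule.span K (p '' Finset.range N) := by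
    rwa [Finset.coe_range, p.span_degreeLT fun i _ => by simp, mem_degreeLT]
  obtain ⟨c, rfl⟩ := (Submodule.mem_span_image_finset_iff_exists_fun' K).1 q_mem_span
  refine Finset.sum_congr rfl fun k hk => ?_
  have coeff_eq : L ((∑ i ∈ Finset.range N, c i • p i) * p k) = c k := by
    rw [OrthonormalFor] at h
    simp [Finset.sum_mul, h, Finset.mem_range.1 hk]
  rw [coeff_eq]

theorem map_mul_eq_zero_of_degree_lt (h : OrthonormalFor L p) {q : K[X]} (hq : q.degree < N) :
    L (p N * q) = 0 := by
  rw [h.eq_sum_smul hq, Finset.mul_sum, map_sum]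
  refine Finset.sum_eq_zero fun k hk => ?_
  rw [mul_smul_comm, map_smul, h, if_neg (Finset.mem_range.1 hk).ne', smul_zero]

theorem map_divByMonic_mul (h : OrthonormalFor L p) {x : K} (hx : (p N).IsRoot x) {f : K[X]}
    (hf : f.degree < N) :
    L (p N /ₘ (X - C x) * f) = f.eval x * L (p N /ₘ (X - C x)) := by
  set q := p N /ₘ (X - C x)
  set r := f /ₘ (X - C x)
  have r_degree : r.degree < N := (degree_divByMonic_le f (X - C x)).trans_lt hf
  have quotient_mul_eq : q * f = p N * r + f.eval x • q := by
    have f_eq : C (f.eval x) + (X - C x) * r = f := by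
      rw [← modByMonic_X_sub_C_eq_C_eval, modByMonic_add_div]
    rw [← mul_divByMonic_eq_iff_isRoot.2 hx, smul_eq_C_mul]
    linear_combination -q * f_eq
  rw [quotient_mul_eq, map_add, h.map_mul_eq_zero_of_degree_lt r_degree, zero_add, map_smul,
    smul_eq_mul]

theorem divByMonic_eq_smul_christoffelDarboux (h : OrthonormalFor L p) {x : K}
    (hx : (p N).IsRoot x) :
    p N /ₘ (X - C x) = L (p N /ₘ (X - C x)) • christoffelDarboux p N x := by
  have quotient_degree : (p N /ₘ (X - C x)).degree < N := by
    rw [← p.degree_eq N]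
    exact degree_divByMonic_lt _ _ (p.ne_zero N) (by simp)
  rw [christoffelDarboux, Finset.smul_sum]
  refine (h.eq_sum_smul quotient_degree).trans (Finset.sum_congr rfl fun k hk => ?_)
  have degree_lt : (p k).degree < N := by
    rw [p.degree_eq]
    exact_mod_cast Finset.mem_range.1 hk
  rw [h.map_divByMonic_mul hx degree_lt, mul_comm, mul_smul]

theorem eval_christoffelDarboux_eq_zero (h : OrthonormalFor L p) {x y : K} (hxy : x ≠ y)
    (hx : (p N).IsRoot x) (hy : (p N).IsRoot y) : (christoffelDarboux p N x).eval y = 0 := by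
  have factorization := mul_divByMonic_eq_iff_isRoot.2 hx
  have quotient_eq := h.divByMonic_eq_smul_christoffelDarboux hx
  set q := p N /ₘ (X - C x)
  have map_quotient_ne_zero : L q ≠ 0 := by
    intro h_zero
    rw [h_zero, zero_smul] at quotient_eq
    rw [quotient_eq, mul_zero] at factorization
    exact p.ne_zero N factorization.symm
  have quotient_eval : q.eval y = 0 := by
    rw [← factorization, IsRoot, eval_mul, eval_sub, eval_X, eval_C] at hy
    exact (mul_eq_zero.1 hy).resolve_left (sub_ne_zero.2 hxy.symm)
  rw [quotient_eq, eval_smul, smul_eq_mul] at quotient_eval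
  exact (mul_eq_zero.1 quotient_eval).resolve_left map_quotient_ne_zero

theorem transpose_evalMatrix_mul_self (h : OrthonormalFor L p) {x : Fin N → K}
    (hx_inj : Function.Injective x) (hx_root : ∀ l, (p N).IsRoot (x l)) :
    (evalMatrix p x)ᵀ * evalMatrix p x =
      Matrix.diagonal fun l => (christoffelDarboux p N (x l)).eval (x l) := by
  ext i j
  have entry : ((evalMatrix p x)ᵀ * evalMatrix p x) i j =
      (christoffelDarboux p N (x i)).eval (x j) := by
    rw [eval_christoffelDarboux, Finset.sum_range]
    rfl
  rw [entry]
  obtain rfl | hij := eq_or_ne i j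
  · rw [Matrix.diagonal_apply_eq]
  · rw [Matrix.diagonal_apply_ne _ hij,
      h.eval_christoffelDarboux_eq_zero (hx_inj.ne hij) (hx_root i) (hx_root j)]

theorem evalMatrix_mul_diagonal_mul_transpose [LinearOrder K] [IsStrictOrderedRing K]
    (h : OrthonormalFor L p) {x : Fin N → K} (hx_inj : Function.Injective x)
    (hx_root : ∀ l, (p N).IsRoot (x l)) :
    evalMatrix p x * Matrix.diagonal (fun l => ((christoffelDarboux p N (x l)).eval (x l))⁻¹) *
      (evalMatrix p x)ᵀ = 1 := by
  rw [Matrix.mul_assoc, mul_eq_one_comm, Matrix.mul_assoc,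
    h.transpose_evalMatrix_mul_self hx_inj hx_root, Matrix.diagonal_mul_diagonal,
    ← Matrix.diagonal_one]
  congr 1
  ext l
  exact inv_mul_cancel₀ (christoffelDarboux_eval_self_pos p l.pos (x l)).ne'

end OrthonormalFor

/-- Integration of polynomials against the weight `w`, as a linear functional: the
functional `L` of the orthonormality relation in the case of a weight function. -/
def weightedIntegral (μ : Measure ℝ) (w : ℝ → ℝ)
    (hw : ∀ l : ℕ, Integrable (fun x => x ^ l * w x) μ) : ℝ[X] →ₗ[ℝ] ℝ :=
  have integrable_eval_mul (q : ℝ[X]) : Integrable (fun x => q.eval x * w x) μ := by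
    simp only [eval_eq_sum_range, Finset.sum_mul, mul_assoc]
    exact integrable_finsetSum _ fun l _ => (hw l).const_mul _
  { toFun q := ∫ x, q.eval x * w x ∂μ
    map_add' q r := by
      simp only [eval_add, add_mul]
      exact integral_add (integrable_eval_mul q) (integrable_eval_mul r)
    map_smul' c q := by
      simp only [eval_smul, smul_eq_mul, mul_assoc, RingHom.id_apply]
      exact integral_const_mul c _ }

end OrthonormalPolynomials

section ShiftedParts

variable {m n : ℕ}

theorem mem_Lam {lam : Fin n → ℕ} : lam ∈ Lam m n ↔ (∀ j, lam j ≤ m) ∧ Antitone lam := by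
  simp [Lam, Antitone]

/-- The strictly decreasing sequence `λ_j + n - j` (with `j` counted from `1`) of a partition
`λ ∈ Λ^{(m,n)}`, with its values bounded by `m + n`. -/
def shiftedParts (lam : Lam m n) (j : Fin n) : Fin (m + n) :=
  ⟨lam.1 j + (n - 1 - j), by have := (mem_Lam.1 lam.2).1 j; omega⟩

theorem shiftedParts_strictAnti (lam : Lam m n) : StrictAnti (shiftedParts lam) := by
  intro i j hij
  have := (mem_Lam.1 lam.2).2 hij.le
  simp only [shiftedParts, Fin.lt_def] at hij ⊢
  omega

theorem shiftedParts_injective : Function.Injective (shiftedParts : Lam m n → _) := by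
  intro lam mu h
  ext j
  simpa [shiftedParts] using congrFun h j

theorem antitone_add_val_of_strictAnti {g : Fin n → ℕ} (hg : StrictAnti g) :
    Antitone fun j => g j + j := by
  cases n with
  | zero => exact Subsingleton.antitone _
  | succ n =>
    refine Fin.antitone_iff_succ_le.2 fun i => ?_
    have := hg i.castSucc_lt_succ
    simp only [Fin.val_succ, Fin.val_castSucc]
    omega

theorem exists_shiftedParts_eq {g : Fin n → Fin (m + n)} (hg : StrictAnti g) :
    ∃ lam : Lam m n, shiftedParts lam = g := by
  have add_val_le {i j : Fin n} (hij : i ≤ j) : (g j : ℕ) + j ≤ g i + i :=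
    antitone_add_val_of_strictAnti (g := fun j => (g j : ℕ)) hg hij
  have le_apply (j : Fin n) : n - 1 - j ≤ g j := by
    have := add_val_le (j := ⟨n - 1, Nat.sub_one_lt j.pos.ne'⟩)
      (Fin.le_def.2 (Nat.le_sub_one_of_lt j.2))
    simp only at this
    omega
  have mem : (fun j => (g j : ℕ) - (n - 1 - j)) ∈ Lam m n := by
    refine mem_Lam.2 ⟨fun j => ?_, fun i j hij => ?_⟩
    · have := add_val_le (i := ⟨0, j.pos⟩) (j := j) (Nat.zero_le j)
      simp only at this
      omega
    · have := add_val_le hij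
      have := Fin.le_def.1 hij
      simp only
      omega
  refine ⟨⟨_, mem⟩, funext fun j => Fin.ext ?_⟩
  exact Nat.sub_add_cancel (le_apply j)

open scoped Classical in
theorem sum_comp_shiftedParts {M : Type*} [AddCommMonoid M] (F : (Fin n → Fin (m + n)) → M) :
    ∑ lam : Lam m n, F (shiftedParts lam) = ∑ g : Fin n → Fin (m + n) with StrictAnti g, F g :=
  Finset.sum_nbij shiftedParts (by simp [shiftedParts_strictAnti])
    shiftedParts_injective.injOn
    (fun _ hg => by simpa using exists_shiftedParts_eq (Finset.mem_filter.1 hg).2)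
    fun _ _ => rfl

end ShiftedParts

theorem schurDet_node {m n : ℕ} (p : ℕ → Polynomial ℝ) (xr : ℕ → ℝ) (lam lh : Lam m n) :
    schurDet n p lam (node n xr lh) =
      ((evalMatrix p fun l : Fin (m + n) => xr l).submatrix (shiftedParts lam)
        (shiftedParts lh)).det :=
  rfl

theorem chrW_eq_inv_eval_christoffelDarboux (p : ℕ → Polynomial ℝ) (N : ℕ) (xr : ℕ → ℝ)
    (l : ℕ) : chrW p N xr l = ((christoffelDarboux p N (xr l)).eval (xr l))⁻¹ := by
  simp only [chrW, eval_christoffelDarboux, sq]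

theorem generalized_schur_discrete_orthogonality_general {m n : ℕ}
    {L : Polynomial ℝ →ₗ[ℝ] ℝ} {p : Polynomial.Sequence ℝ} (hp : OrthonormalFor L p)
    {xr : ℕ → ℝ} (hxr_inj : Set.InjOn xr (Set.Iio (m + n)))
    (hxr_root : ∀ l < m + n, (p (m + n)).IsRoot (xr l))
    {P : (Fin n → ℕ) → (Fin n → ℝ) → ℝ}
    (hPdet : ∀ lam x, vand n x * P lam x = schurDet n p lam x)
    {lam mu : Fin n → ℕ} (hlam : lam ∈ Lam m n) (hmu : mu ∈ Lam m n) :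
    (∑ lh ∈ Lam m n,
      P lam (node n xr lh) * P mu (node n xr lh) *
        (vand n (node n xr lh) ^ 2 *
          ∏ j : Fin n, chrW p (m + n) xr (lh j + (n - 1 - (j : ℕ)))))
    = if mu = lam then 1 else 0 := by
  classical
  lift lam to Lam m n using hlam
  lift mu to Lam m n using hmu
  let x : Fin (m + n) → ℝ := fun l => xr l
  let d : Fin (m + n) → ℝ := fun l => ((christoffelDarboux p (m + n) (x l)).eval (x l))⁻¹
  have hx_inj : Function.Injective x := fun k l h => Fin.ext (hxr_inj k.2 l.2 h)
  have summand_eq (lh : Lam m n) :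
      P lam (node n xr lh) * P mu (node n xr lh) * (vand n (node n xr lh) ^ 2 *
          ∏ j : Fin n, chrW p (m + n) xr (lh.1 j + (n - 1 - (j : ℕ)))) =
        ((evalMatrix p x).submatrix (shiftedParts lam) (shiftedParts lh)).det *
          ((evalMatrix p x).submatrix (shiftedParts mu) (shiftedParts lh)).det *
          ∏ j, d (shiftedParts lh j) := by
    simp only [x, d, ← schurDet_node, ← hPdet, chrW_eq_inv_eval_christoffelDarboux, shiftedParts]
    ring
  rw [← Finset.sum_coe_sort (Lam m n), Finset.sum_congr rfl fun lh _ => summand_eq lh,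
    sum_comp_shiftedParts fun g => ((evalMatrix p x).submatrix (shiftedParts lam) g).det *
      ((evalMatrix p x).submatrix (shiftedParts mu) g).det * ∏ j, d (g j),
    sum_det_mul_det_mul_prod_eq_det,
    hp.evalMatrix_mul_diagonal_mul_transpose hx_inj fun l => hxr_root l l.2,
    det_one_submatrix_of_strictAnti (shiftedParts_strictAnti lam) (shiftedParts_strictAnti mu)]
  simp only [shiftedParts_injective.eq_iff, Subtype.ext_iff, eq_comm]

theorem generalized_schur_discrete_orthogonality
    (n : ℕ) (hn : 0 < n) (m : ℕ)
    (a b : ℝ) (hab : a < b)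
    (w : ℝ → ℝ)
    (hw_cont : ContinuousOn w (Set.Ioo a b))
    (hw_pos : ∀ x ∈ Set.Ioo a b, 0 < w x)
    (hw_mom : ∀ l : ℕ, IntegrableOn (fun x => x ^ l * w x) (Set.Ioo a b))
    -- the orthonormal polynomials for the weight w
    (p : ℕ → Polynomial ℝ)
    (hdeg : ∀ l, (p l).degree = l)
    (hlead : ∀ l, 0 < (p l).leadingCoeff)
    (horth : ∀ l k, (∫ x in Set.Ioo a b, (p l).eval x * (p k).eval x * w x)
      = if l = k then 1 else 0)
    -- the ordered roots of p_{m+n} in (a,b)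
    (xr : ℕ → ℝ)
    (hxr_mem : ∀ l < m + n, xr l ∈ Set.Ioo a b)
    (hxr_mono : ∀ k l : ℕ, k < l → l < m + n → xr k < xr l)
    (hxr_root : ∀ l < m + n, (p (m + n)).eval (xr l) = 0)
    -- the generalized Schur polynomials
    (P : (Fin n → ℕ) → (Fin n → ℝ) → ℝ)
    (hPcont : ∀ lam, Continuous (P lam))
    (hPdet : ∀ lam x, vand n x * P lam x = schurDet n p lam x)
    (lam mu : Fin n → ℕ)
    (hlam : lam ∈ Lam m n) (hmu : mu ∈ Lam m n) :
    (∑ lh ∈ Lam m n,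
      P lam (node n xr lh) * P mu (node n xr lh) *
        (vand n (node n xr lh) ^ 2 *
          ∏ j : Fin n, chrW p (m + n) xr (lh j + (n - 1 - (j : ℕ)))))
    = if mu = lam then 1 else 0 := by
  have hp : OrthonormalFor (weightedIntegral _ w hw_mom) ⟨p, hdeg⟩ := fun l k => by
    rw [← horth l k]
    simp [weightedIntegral]
  have hxr_strictMono : StrictMonoOn xr (Set.Iio (m + n)) := fun k _ l hl hkl => hxr_mono k l hkl hl
  exact generalized_schur_discrete_orthogonality_general hp hxr_strictMono.injOn hxr_root hPdet
    hlam hmu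

end
end

section
/- Exact Gaussian cubature rule in ℙ^{(2m+1,n)} (Proposition 4.2): for every f ∈ ℙ^{(2m+1,n)}, (1/n!) ∫_a^b ⋯ ∫_a^b f(x) W(x) dx_1⋯dx_n = Σ_{λ̂ ∈ Λ^{(m,n)}} f(x_λ̂^{(m,n)}) W_λ̂. -/
open MeasureTheory Real Finset

noncomputable section

/-- The symmetric monomial `M_λ(x)`. -/
def msym (n : ℕ) (lam : Fin n → ℕ) : (Fin n → ℝ) → ℝ := fun x =>
  ∑ mu ∈ Finset.univ.image (fun σ : Equiv.Perm (Fin n) => lam ∘ σ), ∏ j : Fin n, x j ^ mu j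

/-- The space `ℙ^{(m,n)}`: span of the symmetric monomials `M_λ`, `λ ∈ Λ^{(m,n)}`. -/
def pSpace (m n : ℕ) : Submodule ℝ ((Fin n → ℝ) → ℝ) :=
  Submodule.span ℝ (msym n '' (Lam m n : Set (Fin n → ℕ)))

/-!
The polynomial `f V²` has degree at most `(2m + 1) + 2(n - 1) = 2(m + n) - 1` in each variable, so
the Gauss rule with the `m + n` roots of `p_{m+n}`, applied in each of the `n` variables separately,
integrates it exactly and gives a sum over all `n`-tuples of roots. The factor `V²` kills the tuples
with a repeated root. By symmetry each of the remaining tuples contributes as much as its decreasing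
rearrangement, which produces the factor `n!`, and the decreasing tuples of root indices are exactly
the `λ + (n - 1, …, 1, 0)` with `λ ∈ Λ^{(m,n)}`.
-/

section GaussQuadrature

open Polynomial

variable {K : Type*} [Field K]

theorem map_mul_eq_zero_of_degree_lt {M : Type*} [AddCommGroup M] [Module K M]
    (L : K[X] →ₗ[K] M) {p : ℕ → K[X]} (hdeg : ∀ l, (p l).degree = l) {P : K[X]} {N : ℕ}
    (horth : ∀ k < N, L (P * p k) = 0) {s : K[X]} (hs : s.degree < N) : L (P * s) = 0 := by
  let S : Polynomial.Sequence K := ⟨p, hdeg⟩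
  have hspan : Submodule.span K (S '' Set.Iio N) = degreeLT K N :=
    S.span_degreeLT fun l _ => (leadingCoeff_ne_zero.2 (S.ne_zero l)).isUnit
  have hker : Submodule.span K (S '' Set.Iio N) ≤ LinearMap.ker (L ∘ₗ LinearMap.mulLeft K P) := by
    rw [Submodule.span_le]
    rintro _ ⟨k, hk, rfl⟩
    exact horth k hk
  exact hker (hspan ▸ mem_degreeLT.2 hs)

theorem degree_div_lt_of_degree_lt_degree_add {r P : K[X]} (hP : P ≠ 0) {N : ℕ}
    (hr : r.degree < P.degree + N) : (r / P).degree < N := by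
  rcases lt_or_ge r.degree P.degree with hlt | hle
  · rw [(Polynomial.div_eq_zero_iff hP).2 hlt, degree_zero]
    exact WithBot.bot_lt_coe N
  · rw [← degree_add_div hP hle] at hr
    exact lt_of_add_lt_add_left hr

theorem map_eq_sum_map_lagrange_basis {ι : Type*} [DecidableEq ι] (L : K[X] →ₗ[K] K)
    {s : Finset ι} {v : ι → K} (hv : Set.InjOn v s) {r : K[X]} (hr : r.degree < #s) :
    L r = ∑ i ∈ s, L (Lagrange.basis s v i) * r.eval (v i) := by
  conv_lhs => rw [Lagrange.eq_interpolate hv hr, Lagrange.interpolate_apply, map_sum]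
  refine Finset.sum_congr rfl fun i _ => ?_
  rw [← smul_eq_C_mul, map_smul, smul_eq_mul, mul_comm]

theorem map_eq_sum_map_lagrange_basis_of_orthogonal {ι : Type*} [DecidableEq ι]
    (L : K[X] →ₗ[K] K) {s : Finset ι} {v : ι → K} (hv : Set.InjOn v s) {P : K[X]}
    (hP : P.degree = #s) (hroot : ∀ i ∈ s, P.eval (v i) = 0)
    (horth : ∀ t : K[X], t.degree < #s → L (P * t) = 0)
    {r : K[X]} (hr : r.degree < (2 * #s : ℕ)) :
    L r = ∑ i ∈ s, L (Lagrange.basis s v i) * r.eval (v i) := by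
  have hP0 : P ≠ 0 := by
    rintro rfl
    simp at hP
  have hquot : (r / P).degree < #s := by
    refine degree_div_lt_of_degree_lt_degree_add hP0 ?_
    rwa [hP, ← Nat.cast_add, ← two_mul]
  have hrem : (r % P).degree < #s := hP ▸ EuclideanDomain.mod_lt r hP0
  have hdiv : P * (r / P) + r % P = r := EuclideanDomain.div_add_mod r P
  have heval : ∀ i ∈ s, (r % P).eval (v i) = r.eval (v i) := fun i hi => by
    conv_rhs => rw [← hdiv, eval_add, eval_mul, hroot i hi, zero_mul, zero_add]
  calc L r = L (P * (r / P)) + L (r % P) := by rw [← map_add, hdiv]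
    _ = ∑ i ∈ s, L (Lagrange.basis s v i) * (r % P).eval (v i) := by
      rw [horth _ hquot, zero_add, map_eq_sum_map_lagrange_basis L hv hrem]
    _ = ∑ i ∈ s, L (Lagrange.basis s v i) * r.eval (v i) :=
      Finset.sum_congr rfl fun i hi => by rw [heval i hi]

-- The hypothesis says that the matrix `c i * A k i` is a right inverse of `A`. For a square matrix
-- it is then also a left inverse, so orthonormality of the rows passes to the columns.
theorem mul_sum_sq_eq_one_of_weighted_orthonormal_rows {ι R : Type*} [Fintype ι] [DecidableEq ι]
    [CommRing R] {A : Matrix ι ι R} {c : ι → R}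
    (horth : ∀ j k, ∑ i, c i * (A j i * A k i) = if j = k then 1 else 0) (i : ι) :
    c i * ∑ k, A k i ^ 2 = 1 := by
  have hright : A * (Matrix.diagonal c * A.transpose) = 1 := by
    ext j k
    simp only [Matrix.mul_apply (M := A), Matrix.diagonal_mul, Matrix.transpose_apply,
      Matrix.one_apply, ← horth, mul_left_comm]
  have hleft : Matrix.diagonal c * A.transpose * A = 1 := mul_eq_one_comm.1 hright
  calc c i * ∑ k, A k i ^ 2 = (Matrix.diagonal c * A.transpose * A) i i := by
        simp only [Matrix.mul_apply (N := A), Matrix.diagonal_mul, Matrix.transpose_apply,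
          Finset.mul_sum, sq, mul_assoc]
    _ = 1 := by rw [hleft, Matrix.one_apply_eq]

theorem map_eq_sum_chrW (L : ℝ[X] →ₗ[ℝ] ℝ) {p : ℕ → ℝ[X]} (hdeg : ∀ l, (p l).degree = l)
    {N : ℕ} (horth : ∀ l ≤ N, ∀ k < N, L (p l * p k) = if l = k then 1 else 0)
    {v : ℕ → ℝ} (hv : Set.InjOn v (range N)) (hroot : ∀ i < N, (p N).eval (v i) = 0)
    {r : ℝ[X]} (hr : r.degree < (2 * N : ℕ)) :
    L r = ∑ i ∈ range N, chrW p N v i * r.eval (v i) := by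
  have hlagrange : ∀ {t : ℝ[X]}, t.degree < (2 * N : ℕ) →
      L t = ∑ i ∈ range N, L (Lagrange.basis (range N) v i) * t.eval (v i) := fun ht =>
    map_eq_sum_map_lagrange_basis_of_orthogonal L hv (by rw [hdeg, card_range])
      (fun i hi => hroot i (mem_range.1 hi))
      (fun t ht => map_mul_eq_zero_of_degree_lt L hdeg
        (fun k hk => (horth N le_rfl k hk).trans (if_neg hk.ne')) (card_range N ▸ ht))
      ((card_range N).symm ▸ ht)
  have hrows (j k : Fin N) : ∑ i : Fin N, L (Lagrange.basis (range N) v i) *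
      ((p j).eval (v i) * (p k).eval (v i)) = if j = k then 1 else 0 := by
    have hjk : (p j * p k).degree < (2 * N : ℕ) := by
      rw [degree_mul, hdeg, hdeg]
      exact_mod_cast (by lia : (j : ℕ) + k < 2 * N)
    simp only [Fin.ext_iff, ← horth j j.2.le k k.2, hlagrange hjk, eval_mul, Finset.sum_range]
  have hweight (i : Fin N) : L (Lagrange.basis (range N) v i) = chrW p N v i := by
    rw [chrW, Finset.sum_range]
    exact eq_inv_of_mul_eq_one_left (mul_sum_sq_eq_one_of_weighted_orthonormal_rows
      (A := Matrix.of fun k i : Fin N => (p k).eval (v i)) hrows i)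
  rw [hlagrange hr]
  exact Finset.sum_congr rfl fun i hi => by rw [hweight ⟨i, mem_range.1 hi⟩]

end GaussQuadrature

section MomentFunctional

open Polynomial

variable (μ : Measure ℝ) (w : ℝ → ℝ)

/-- The moment functional of the weight `w` with respect to `μ`: the linear extension to all
polynomials of `X ^ l ↦ ∫ x ^ l w(x) dμ`. Moments that do not converge are `0` by the convention
for the Bochner integral. -/
def momentFunctional : ℝ[X] →ₗ[ℝ] ℝ :=
  Polynomial.lsum fun l => LinearMap.toSpanSingleton ℝ ℝ (∫ x, x ^ l * w x ∂μ)

theorem momentFunctional_X_pow (l : ℕ) :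
    momentFunctional μ w (X ^ l) = ∫ x, x ^ l * w x ∂μ := by
  simp [momentFunctional, ← monomial_one_right_eq_X_pow]

variable {μ w}

theorem momentFunctional_eq_integral {D : ℕ}
    (hmom : ∀ l < D, Integrable (fun x => x ^ l * w x) μ) {q : ℝ[X]} (hq : q.degree < D) :
    momentFunctional μ w q = ∫ x, q.eval x * w x ∂μ := by
  have hint : ∀ l ∈ q.support, Integrable (fun x => q.coeff l * (x ^ l * w x)) μ := fun l hl =>
    (hmom l (Nat.cast_lt.1 ((le_degree_of_mem_supp l hl).trans_lt hq))).const_mul _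
  simp only [eval_eq_sum, Polynomial.sum_def, Finset.sum_mul, mul_assoc]
  rw [integral_finsetSum _ hint]
  simp [momentFunctional, Polynomial.sum_def, integral_const_mul]

theorem integral_pow_mul_eq_sum_chrW {p : ℕ → ℝ[X]} (hdeg : ∀ l, (p l).degree = l) {N : ℕ}
    (hmom : ∀ l < 2 * N, Integrable (fun x => x ^ l * w x) μ)
    (horth : ∀ l ≤ N, ∀ k < N,
      ∫ x, (p l).eval x * (p k).eval x * w x ∂μ = if l = k then 1 else 0)
    {v : ℕ → ℝ} (hv : Set.InjOn v (range N)) (hroot : ∀ i < N, (p N).eval (v i) = 0)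
    {l : ℕ} (hl : l < 2 * N) :
    ∫ x, x ^ l * w x ∂μ = ∑ i ∈ range N, chrW p N v i * v i ^ l := by
  have horth' : ∀ l ≤ N, ∀ k < N,
      momentFunctional μ w (p l * p k) = if l = k then 1 else 0 := fun l hl k hk => by
    have hlk : (p l * p k).degree < (2 * N : ℕ) := by
      rw [degree_mul, hdeg, hdeg]
      exact_mod_cast (by lia : l + k < 2 * N)
    simp only [momentFunctional_eq_integral hmom hlk, eval_mul, horth l hl k hk]
  have hXl : (X ^ l : ℝ[X]).degree < (2 * N : ℕ) := by
    rw [degree_X_pow]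
    exact_mod_cast hl
  rw [← momentFunctional_X_pow, map_eq_sum_chrW _ hdeg horth' hv hroot hXl]
  simp only [eval_pow, eval_X]

end MomentFunctional

section ProductRule

open MvPolynomial

theorem integral_pi_eval_mul_prod_eq_sum {ι κ : Type*} [Fintype ι] [DecidableEq ι] {μ : Measure ℝ}
    [SigmaFinite μ] {w : ℝ → ℝ} {D : ℕ} (hmom : ∀ l < D, Integrable (fun x => x ^ l * w x) μ)
    {s : Finset κ} {c v : κ → ℝ}
    (hquad : ∀ l < D, ∫ x, x ^ l * w x ∂μ = ∑ i ∈ s, c i * v i ^ l)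
    {q : MvPolynomial ι ℝ} (hq : ∀ j, q.degreeOf j < D) :
    ∫ x : ι → ℝ, eval x q * ∏ j, w (x j) ∂(Measure.pi fun _ => μ) =
      ∑ g ∈ Fintype.piFinset fun _ => s, eval (v ∘ g) q * ∏ j, c (g j) := by
  have hexp : ∀ d ∈ q.support, ∀ j, d j < D := fun d hd j =>
    (degreeOf_le_iff.1 le_rfl d hd).trans_lt (hq j)
  have hint : ∀ d ∈ q.support, Integrable (fun x : ι → ℝ =>
      q.coeff d * ∏ j, (x j ^ d j * w (x j))) (Measure.pi fun _ => μ) := fun d hd =>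
    (Integrable.fintype_prod (f := fun j t => t ^ d j * w t)
      fun j => hmom (d j) (hexp d hd j)).const_mul _
  have hmonomial : ∀ d ∈ q.support,
      ∫ x : ι → ℝ, q.coeff d * ∏ j, (x j ^ d j * w (x j)) ∂(Measure.pi fun _ => μ) =
        ∑ g ∈ Fintype.piFinset fun _ => s, q.coeff d * ∏ j, (v (g j) ^ d j * c (g j)) :=
      fun d hd => by
    rw [integral_const_mul, integral_fintype_prod_eq_prod fun j t => t ^ d j * w t,
      Finset.prod_congr rfl fun j _ => hquad (d j) (hexp d hd j), Finset.prod_univ_sum,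
      Finset.mul_sum]
    simp only [mul_comm]
  simp only [eval_eq', Finset.sum_mul, mul_assoc, ← Finset.prod_mul_distrib, Function.comp_apply]
  rw [integral_finsetSum _ hint, Finset.sum_congr rfl hmonomial, Finset.sum_comm]

end ProductRule

section SymmetricPolynomials

open MvPolynomial

theorem pSpace_le_map_restrictDegree (d n : ℕ) :
    pSpace d n ≤ (restrictDegree (Fin n) ℝ d).map
      (LinearMap.pi fun x => (aeval x : MvPolynomial (Fin n) ℝ →ₐ[ℝ] ℝ).toLinearMap) := by
  rw [pSpace, Submodule.span_le]
  rintro _ ⟨lam, hlam, rfl⟩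
  refine ⟨∑ mu ∈ univ.image fun σ : Equiv.Perm (Fin n) => lam ∘ σ,
    monomial (Finsupp.equivFunOnFinite.symm mu) 1, Submodule.sum_mem _ fun mu hmu => ?_, ?_⟩
  · obtain ⟨σ, -, rfl⟩ := Finset.mem_image.1 hmu
    rw [Lam, mem_coe, Finset.mem_filter, Fintype.mem_piFinset] at hlam
    rw [mem_restrictDegree]
    intro e he j
    rw [Finset.mem_singleton.1 (support_monomial_subset he)]
    exact Nat.lt_succ_iff.1 (Finset.mem_range.1 (hlam.1 (σ j)))
  · ext x
    simp [msym, aeval_monomial, Finsupp.prod_fintype]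

theorem exists_mvPolynomial_of_mem_pSpace {d n : ℕ} {f : (Fin n → ℝ) → ℝ}
    (hf : f ∈ pSpace d n) :
    ∃ q : MvPolynomial (Fin n) ℝ, (∀ j, q.degreeOf j ≤ d) ∧ ∀ x, eval x q = f x := by
  obtain ⟨q, hq, rfl⟩ := pSpace_le_map_restrictDegree d n hf
  exact ⟨q, fun j => degreeOf_le_iff.2 fun e he => (mem_restrictDegree _ _ _).1 hq e he j,
    fun _ => rfl⟩

theorem msym_comp_perm {n : ℕ} (lam : Fin n → ℕ) (σ : Equiv.Perm (Fin n)) (x : Fin n → ℝ) :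
    msym n lam (x ∘ σ) = msym n lam x := by
  refine Finset.sum_equiv (σ.arrowCongr (Equiv.refl ℕ)) (fun mu => ?_) fun mu _ => ?_
  · simp only [Finset.mem_image, Finset.mem_univ, true_and]
    constructor
    · rintro ⟨τ, rfl⟩
      exact ⟨σ.symm.trans τ, rfl⟩
    · rintro ⟨τ, hτ⟩
      exact ⟨σ.trans τ, funext fun j => by simpa using congrFun hτ (σ j)⟩
  · simpa using Equiv.prod_comp σ fun j => x j ^ mu (σ.symm j)

theorem apply_comp_perm_of_mem_pSpace {d n : ℕ} {f : (Fin n → ℝ) → ℝ} (hf : f ∈ pSpace d n)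
    (σ : Equiv.Perm (Fin n)) (x : Fin n → ℝ) : f (x ∘ σ) = f x := by
  induction hf using Submodule.span_induction with
  | mem f hf =>
    obtain ⟨lam, -, rfl⟩ := hf
    exact msym_comp_perm lam σ x
  | zero => rfl
  | add f g _ _ hf hg => simp only [Pi.add_apply, hf, hg]
  | smul c f _ hf => simp only [Pi.smul_apply, hf]

theorem vand_sq_eq_det_vandermonde_sq (n : ℕ) (x : Fin n → ℝ) :
    vand n x ^ 2 = (Matrix.vandermonde x).det ^ 2 := by
  simp only [Matrix.det_vandermonde, vand, ← Finset.prod_pow, Finset.filter_lt_eq_Ioi,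
    sub_sq_comm]

theorem vand_sq_comp_perm {n : ℕ} (x : Fin n → ℝ) (σ : Equiv.Perm (Fin n)) :
    vand n (x ∘ σ) ^ 2 = vand n x ^ 2 := by
  have hperm : Matrix.vandermonde (x ∘ σ) = (Matrix.vandermonde x).submatrix σ id := rfl
  rw [vand_sq_eq_det_vandermonde_sq, vand_sq_eq_det_vandermonde_sq, hperm, Matrix.det_permute,
    mul_pow]
  rcases Int.units_eq_one_or (Equiv.Perm.sign σ) with h | h <;> simp [h]

theorem vand_sq_eq_zero_of_not_injective {n : ℕ} {x : Fin n → ℝ} (hx : ¬ Function.Injective x) :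
    vand n x ^ 2 = 0 := by
  rw [vand_sq_eq_det_vandermonde_sq, sq_eq_zero_iff]
  exact not_ne_iff.1 (Matrix.det_vandermonde_ne_zero_iff.not.2 hx)

theorem eval_det_vandermonde_X {R : Type*} [CommRing R] {n : ℕ} (x : Fin n → R) :
    eval x (Matrix.vandermonde (X : Fin n → MvPolynomial (Fin n) R)).det =
      (Matrix.vandermonde x).det := by
  rw [RingHom.map_det]
  congr 1
  ext i j
  simp [Matrix.vandermonde_apply]

theorem degreeOf_det_vandermonde_X_lt (R : Type*) [CommRing R] {n : ℕ} (i : Fin n) :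
    degreeOf i (Matrix.vandermonde (X : Fin n → MvPolynomial (Fin n) R)).det < n := by
  have hterm (σ : Equiv.Perm (Fin n)) :
      ((Equiv.Perm.sign σ : ℤ) : MvPolynomial (Fin n) R) * ∏ j, X j ^ (σ j : ℕ) =
        monomial (Finsupp.equivFunOnFinite.symm fun j => (σ j : ℕ))
          ((Equiv.Perm.sign σ : ℤ) : R) := by
    simp [monomial_eq, Finsupp.prod_fintype]
  rw [degreeOf_lt_iff i.pos, ← Matrix.det_transpose, Matrix.det_apply']
  simp only [Matrix.transpose_apply, Matrix.vandermonde_apply, hterm]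
  intro d hd
  obtain ⟨σ, -, hσ⟩ := Finset.mem_biUnion.1 (support_sum hd)
  rw [Finset.mem_singleton.1 (support_monomial_subset hσ)]
  exact (σ i).isLt

theorem exists_mvPolynomial_mul_vand_sq {m n : ℕ} {f : (Fin n → ℝ) → ℝ}
    (hf : f ∈ pSpace (2 * m + 1) n) :
    ∃ q : MvPolynomial (Fin n) ℝ, (∀ j, q.degreeOf j < 2 * (m + n)) ∧
      ∀ x, eval x q = f x * vand n x ^ 2 := by
  obtain ⟨q, hq, hqf⟩ := exists_mvPolynomial_of_mem_pSpace hf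
  refine ⟨q * (Matrix.vandermonde X).det ^ 2, fun j => ?_, fun x => ?_⟩
  · have hV := degreeOf_det_vandermonde_X_lt ℝ j
    have hV2 := degreeOf_pow_le j (Matrix.vandermonde (X : Fin n → MvPolynomial (Fin n) ℝ)).det 2
    have hmul := degreeOf_mul_le j q ((Matrix.vandermonde X).det ^ 2)
    have := hq j
    lia
  · rw [eval_mul, eval_pow, eval_det_vandermonde_X, hqf, vand_sq_eq_det_vandermonde_sq]

end SymmetricPolynomials

section SortedIndices

theorem existsUnique_perm_strictAnti_comp {α : Type*} [LinearOrder α] {n : ℕ} {g : Fin n → α}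
    (hg : Function.Injective g) : ∃! σ : Equiv.Perm (Fin n), StrictAnti (g ∘ σ) := by
  have hsort : StrictMono (g ∘ Tuple.sort g) :=
    (Tuple.monotone_sort g).strictMono_of_injective (hg.comp (Tuple.sort g).injective)
  have hrev : StrictAnti (g ∘ Fin.revPerm.trans (Tuple.sort g)) :=
    hsort.comp_strictAnti Fin.rev_strictAnti
  exact ⟨_, hrev, fun σ hσ => Equiv.ext fun j =>
    hg (congrFun (Tuple.unique_antitone hσ.antitone hrev.antitone) j)⟩

theorem sum_piFinset_eq_factorial_nsmul_sum_strictAnti {α M : Type*} [LinearOrder α]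
    [AddCommMonoid M] {n : ℕ} (s : Finset α) {F : (Fin n → α) → M}
    (hsymm : ∀ g (σ : Equiv.Perm (Fin n)), F (g ∘ σ) = F g)
    (hzero : ∀ g, ¬ Function.Injective g → F g = 0) :
    ∑ g ∈ Fintype.piFinset (fun _ : Fin n => s), F g =
      n.factorial • ∑ g ∈ Fintype.piFinset (fun _ : Fin n => s) with StrictAnti g, F g := by
  have hsorted (g : Fin n → α) :
      F g = ∑ σ : Equiv.Perm (Fin n), if StrictAnti (g ∘ σ) then F (g ∘ σ) else 0 := by
    by_cases hg : Function.Injective g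
    · obtain ⟨σ, hσ, huniq⟩ := existsUnique_perm_strictAnti_comp hg
      rw [Finset.sum_eq_single_of_mem σ (Finset.mem_univ σ)
        fun τ _ hτ => if_neg fun h => hτ (huniq τ h), if_pos hσ, hsymm]
    · rw [hzero g hg]
      exact (Finset.sum_eq_zero fun σ _ => if_neg fun h =>
        hg ((σ.injective_comp g).1 h.injective)).symm
  have hreindex (σ : Equiv.Perm (Fin n)) :
      (∑ g ∈ Fintype.piFinset (fun _ : Fin n => s),
        if StrictAnti (g ∘ σ) then F (g ∘ σ) else 0) =
      ∑ g ∈ Fintype.piFinset (fun _ : Fin n => s) with StrictAnti g, F g := by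
    rw [Finset.sum_filter]
    refine Finset.sum_equiv (σ.symm.arrowCongr (Equiv.refl α)) (fun g => ?_) fun g _ => rfl
    simp only [Fintype.mem_piFinset]
    exact (σ.forall_congr_right (q := fun j => g j ∈ s)).symm
  rw [Finset.sum_congr rfl fun g _ => hsorted g, Finset.sum_comm,
    Finset.sum_congr rfl fun σ _ => hreindex σ, Finset.sum_const, Finset.card_univ,
    Fintype.card_perm, Fintype.card_fin]

theorem strictAnti_iff_antitone_add_val {n : ℕ} {g : Fin n → ℕ} :
    StrictAnti g ↔ Antitone fun j => g j + (j : ℕ) := by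
  cases n with
  | zero => simp [StrictAnti, Antitone]
  | succ n =>
    simp only [Fin.strictAnti_iff_succ_lt, Fin.antitone_iff_succ_le, Fin.val_succ,
      Fin.val_castSucc]
    exact forall_congr' fun i => by lia

/-- The shifted index `λ + δ`, where `δ = (n - 1, …, 1, 0)`. Adding the staircase `δ` turns the
partitions in `Λ^{(m,n)}` into the strictly decreasing `n`-tuples of root indices below `m + n`. -/
def addStaircase {n : ℕ} (lam : Fin n → ℕ) : Fin n → ℕ :=
  fun j => lam j + (n - 1 - (j : ℕ))

theorem addStaircase_mem_of_mem_Lam {m n : ℕ} {lam : Fin n → ℕ} (hlam : lam ∈ Lam m n) :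
    addStaircase lam ∈ Fintype.piFinset (fun _ : Fin n => range (m + n)) ∧
      StrictAnti (addStaircase lam) := by
  simp only [Lam, Finset.mem_filter, Fintype.mem_piFinset, Finset.mem_range] at hlam ⊢
  refine ⟨fun j => ?_, strictAnti_iff_antitone_add_val.2 fun i j hij => ?_⟩
  · have := hlam.1 j
    simp only [addStaircase]
    lia
  · have := hlam.2 i j hij
    simp only [addStaircase]
    lia

theorem exists_mem_Lam_addStaircase_eq {m n : ℕ} {g : Fin n → ℕ} (hlt : ∀ j, g j < m + n)
    (hg : StrictAnti g) : ∃ lam ∈ Lam m n, addStaircase lam = g := by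
  have hanti : ∀ i j : Fin n, i ≤ j → g j + (j : ℕ) ≤ g i + (i : ℕ) := fun _ _ hij =>
    strictAnti_iff_antitone_add_val.1 hg hij
  have hlower (j : Fin n) : n - 1 ≤ g j + (j : ℕ) := by
    have hlast := hanti j ⟨n - 1, Nat.sub_one_lt_of_lt j.pos⟩ (Nat.le_sub_one_of_lt j.isLt)
    simp only at hlast
    lia
  have hupper (j : Fin n) : g j + (j : ℕ) < m + n :=
    (hanti ⟨0, j.pos⟩ j (Nat.zero_le _)).trans_lt (hlt _)
  refine ⟨fun j => g j - (n - 1 - (j : ℕ)), ?_, funext fun j => ?_⟩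
  · simp only [Lam, Finset.mem_filter, Fintype.mem_piFinset, Finset.mem_range]
    refine ⟨fun j => ?_, fun i j hij => ?_⟩
    · have := hupper j
      lia
    · have := hanti i j hij
      have := hlower i
      lia
  · have := hlower j
    simp only [addStaircase]
    lia

theorem addStaircase_injective {n : ℕ} :
    Function.Injective (addStaircase : (Fin n → ℕ) → Fin n → ℕ) :=
  fun _ _ h => funext fun j => Nat.add_right_cancel (congrFun h j)

theorem sum_piFinset_range_eq_factorial_nsmul_sum_Lam {M : Type*} [AddCommMonoid M] (m : ℕ)
    {n : ℕ} {F : (Fin n → ℕ) → M} (hsymm : ∀ g (σ : Equiv.Perm (Fin n)), F (g ∘ σ) = F g)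
    (hzero : ∀ g, ¬ Function.Injective g → F g = 0) :
    ∑ g ∈ Fintype.piFinset (fun _ : Fin n => range (m + n)), F g =
      n.factorial • ∑ lam ∈ Lam m n, F (addStaircase lam) := by
  rw [sum_piFinset_eq_factorial_nsmul_sum_strictAnti _ hsymm hzero]
  congr 1
  symm
  refine Finset.sum_nbij addStaircase
    (fun lam hlam => Finset.mem_filter.2 (addStaircase_mem_of_mem_Lam hlam))
    addStaircase_injective.injOn (fun g hg => ?_) fun _ _ => rfl
  obtain ⟨hmem, hanti⟩ := Finset.mem_filter.1 hg
  exact exists_mem_Lam_addStaircase_eq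
    (fun j => Finset.mem_range.1 (Fintype.mem_piFinset.1 hmem j)) hanti

end SortedIndices

theorem gaussian_cubature_symmetric_functions_general (n m : ℕ) (μ : Measure ℝ) [SigmaFinite μ]
    (w : ℝ → ℝ) (hw_mom : ∀ l < 2 * (m + n), Integrable (fun x => x ^ l * w x) μ)
    (p : ℕ → Polynomial ℝ) (hdeg : ∀ l, (p l).degree = l)
    (horth : ∀ l ≤ m + n, ∀ k < m + n,
      ∫ x, (p l).eval x * (p k).eval x * w x ∂μ = if l = k then 1 else 0)
    (xr : ℕ → ℝ) (hxr_inj : Set.InjOn xr (range (m + n)))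
    (hxr_root : ∀ l < m + n, (p (m + n)).eval (xr l) = 0)
    (f : (Fin n → ℝ) → ℝ) (hf : f ∈ pSpace (2 * m + 1) n) :
    (1 / (n.factorial : ℝ)) *
      (∫ x : Fin n → ℝ, f x * (vand n x ^ 2 * ∏ j, w (x j)) ∂(Measure.pi fun _ => μ))
    = ∑ lh ∈ Lam m n,
        f (node n xr lh) *
          (vand n (node n xr lh) ^ 2 *
            ∏ j : Fin n, chrW p (m + n) xr (lh j + (n - 1 - (j : ℕ)))) := by
  obtain ⟨q, hq_deg, hq_eval⟩ := exists_mvPolynomial_mul_vand_sq hf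
  let F : (Fin n → ℕ) → ℝ := fun g =>
    f (xr ∘ g) * vand n (xr ∘ g) ^ 2 * ∏ j, chrW p (m + n) xr (g j)
  have hproduct : ∫ x : Fin n → ℝ, f x * vand n x ^ 2 * ∏ j, w (x j) ∂(Measure.pi fun _ => μ) =
      ∑ g ∈ Fintype.piFinset (fun _ : Fin n => range (m + n)), F g := by
    simp only [F, ← hq_eval]
    exact integral_pi_eval_mul_prod_eq_sum hw_mom
      (fun l hl => integral_pow_mul_eq_sum_chrW hdeg hw_mom horth hxr_inj hxr_root hl) hq_deg
  have hF_symm (g : Fin n → ℕ) (σ : Equiv.Perm (Fin n)) : F (g ∘ σ) = F g := by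
    simp only [F, ← Function.comp_assoc, apply_comp_perm_of_mem_pSpace hf, vand_sq_comp_perm]
    exact congrArg _ (Equiv.prod_comp σ fun j => chrW p (m + n) xr (g j))
  have hF_zero (g : Fin n → ℕ) (hg : ¬ Function.Injective g) : F g = 0 := by
    simp only [F, vand_sq_eq_zero_of_not_injective fun h => hg (.of_comp h), mul_zero, zero_mul]
  simp only [← mul_assoc]
  rw [hproduct, sum_piFinset_range_eq_factorial_nsmul_sum_Lam m hF_symm hF_zero, nsmul_eq_mul,
    one_div, inv_mul_cancel_left₀ (by positivity)]
  rfl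

theorem gaussian_cubature_symmetric_functions
    (n : ℕ) (hn : 0 < n) (m : ℕ)
    (a b : ℝ) (hab : a < b)
    (w : ℝ → ℝ)
    (hw_cont : ContinuousOn w (Set.Ioo a b))
    (hw_pos : ∀ x ∈ Set.Ioo a b, 0 < w x)
    (hw_mom : ∀ l : ℕ, IntegrableOn (fun x => x ^ l * w x) (Set.Ioo a b))
    -- the orthonormal polynomials for the weight w
    (p : ℕ → Polynomial ℝ)
    (hdeg : ∀ l, (p l).degree = l)
    (hlead : ∀ l, 0 < (p l).leadingCoeff)
    (horth : ∀ l k, (∫ x in Set.Ioo a b, (p l).eval x * (p k).eval x * w x)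
      = if l = k then 1 else 0)
    -- the ordered roots of p_{m+n} in (a,b)
    (xr : ℕ → ℝ)
    (hxr_mem : ∀ l < m + n, xr l ∈ Set.Ioo a b)
    (hxr_mono : ∀ k l : ℕ, k < l → l < m + n → xr k < xr l)
    (hxr_root : ∀ l < m + n, (p (m + n)).eval (xr l) = 0)
    -- a symmetric polynomial of degree at most 2m+1 in each variable
    (f : (Fin n → ℝ) → ℝ)
    (hf : f ∈ pSpace (2 * m + 1) n) :
    (1 / (n.factorial : ℝ)) *
      (∫ x : Fin n → ℝ in Set.univ.pi (fun _ => Set.Ioo a b),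
        f x * (vand n x ^ 2 * ∏ j, w (x j)))
    = ∑ lh ∈ Lam m n,
        f (node n xr lh) *
          (vand n (node n xr lh) ^ 2 *
            ∏ j : Fin n, chrW p (m + n) xr (lh j + (n - 1 - (j : ℕ)))) := by
  rw [volume_pi, Measure.restrict_pi_pi]
  exact gaussian_cubature_symmetric_functions_general n m (volume.restrict (Set.Ioo a b)) w
    (fun l _ => hw_mom l) p hdeg (fun l _ k _ => horth l k) xr
    (StrictMonoOn.injOn fun k _ l hl hkl => hxr_mono k l hkl (mem_range.1 hl)) hxr_root f hf

end
end
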